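/- arXiv:1806.07137 — 4 statements merged into one kernel-verified Lean document; each statement's English description precedes it below -/
import Mathlib

section
/- For every real h > 0, every real s < 1, and every natural number n ≥ 1, ∏_{i=0}^{n−1} (1 − r_h^{(i)}(s)·(1 − exp(−h))) = 1 − s·(1 − exp(−n·h)). -/
/-- The map `r_h(s) = s·exp(−h) / (1 − s·(1 − exp(−h)))`. -/
noncomputable def r (h : ℝ) (s : ℝ) : ℝ :=
  s * Real.exp (-h) / (1 - s * (1 - Real.exp (-h)))

/-!
Multiplication of the odds `x / (1 - x)` by `q` sends `x` to `q • x = x * q / D q x`, where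
`D q x = 1 - x * (1 - q)`, and `r h` is the case `q = exp (-h)`. These maps compose by multiplying
the factors `q`, and their denominators form a cocycle, `D (p * q) x = D p (q • x) * D q x`, so the
product of the `D q (q ^ i • x)` telescopes to `D (q ^ n) x`.
-/

section Field

variable {K : Type*} [Field K] {p q x : K} {n : ℕ}

/-- The Möbius map multiplying the odds `x / (1 - x)` by `q`, which extends `r h` to arbitrary
fields. It takes the junk value `0` at its pole. -/
def scaleOdds (q x : K) : K :=
  x * q / (1 - x * (1 - q))

lemma one_sub_scaleOdds_mul_one_sub (hx : 1 - x * (1 - q) ≠ 0) :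
    1 - scaleOdds q x * (1 - p) = (1 - x * (1 - p * q)) / (1 - x * (1 - q)) := by
  rw [scaleOdds, eq_div_iff hx, sub_mul, mul_right_comm, div_mul_cancel₀ _ hx]
  ring

lemma scaleOdds_scaleOdds (hx : 1 - x * (1 - q) ≠ 0) :
    scaleOdds p (scaleOdds q x) = scaleOdds (p * q) x :=
  calc
    scaleOdds p (scaleOdds q x)
        = scaleOdds q x * p / ((1 - x * (1 - p * q)) / (1 - x * (1 - q))) := by
      rw [← one_sub_scaleOdds_mul_one_sub hx, scaleOdds]
    _ = x * q * p / (1 - x * (1 - p * q)) := by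
      rw [scaleOdds, div_mul_eq_mul_div, div_div_div_cancel_right₀ hx]
    _ = scaleOdds (p * q) x := by
      rw [scaleOdds, mul_assoc, mul_comm q]

lemma iterate_scaleOdds (hx : ∀ k < n, 1 - x * (1 - q ^ k) ≠ 0) :
    (scaleOdds q)^[n] x = scaleOdds (q ^ n) x := by
  induction n with
  | zero => simp [scaleOdds]
  | succ n ih =>
    rw [Function.iterate_succ_apply', ih fun k hk ↦ hx k (hk.trans n.lt_succ_self),
      scaleOdds_scaleOdds (hx n n.lt_succ_self), pow_succ']

theorem prod_one_sub_iterate_r_general (hx : ∀ k < n, 1 - x * (1 - q ^ k) ≠ 0) :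
    ∏ i ∈ Finset.range n, (1 - (scaleOdds q)^[i] x * (1 - q)) = 1 - x * (1 - q ^ n) := by
  refine Finset.prod_range_induction _ (fun k ↦ 1 - x * (1 - q ^ k)) (by simp) n fun k hk ↦ ?_
  rw [iterate_scaleOdds fun j hj ↦ hx j (hj.trans hk), one_sub_scaleOdds_mul_one_sub (hx k hk),
    mul_div_cancel₀ _ (hx k hk), pow_succ']

end Field

lemma r_eq_scaleOdds (h : ℝ) : r h = scaleOdds (Real.exp (-h)) :=
  rfl

lemma one_sub_mul_one_sub_pos {R : Type*} [Ring R] [PartialOrder R] [IsOrderedRing R] {q s : R}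
    (hq : 0 < q) (hq₁ : q ≤ 1) (hs : s ≤ 1) : 0 < 1 - s * (1 - q) :=
  sub_pos.2 <| calc
    s * (1 - q) ≤ 1 - q := mul_le_of_le_one_left (sub_nonneg.2 hq₁) hs
    _ < 1 := sub_lt_self 1 hq

/-- `∏_{i=0}^{n−1} (1 − r_h^{(i)}(s)·(1 − exp(−h))) = 1 − s·(1 − exp(−n·h))`. -/
theorem prod_one_sub_iterate_r (h : ℝ) (hh : 0 < h) (s : ℝ) (hs : s < 1)
    (n : ℕ) (hn : 1 ≤ n) :
    ∏ i ∈ Finset.range n, (1 - (r h)^[i] s * (1 - Real.exp (-h))) =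
      1 - s * (1 - Real.exp (-(n : ℝ) * h)) := by
  have hexp : Real.exp (-h) ≤ 1 := Real.exp_le_one_iff.2 (neg_nonpos.2 hh.le)
  rw [r_eq_scaleOdds, neg_mul_comm, Real.exp_nat_mul]
  exact prod_one_sub_iterate_r_general fun k _ ↦ (one_sub_mul_one_sub_pos
    (pow_pos (Real.exp_pos _) k) (pow_le_one₀ (Real.exp_pos _).le hexp) hs.le).ne'
end

section
/- For every real h > 0, every real s < 1, and every natural number m, 1 − r_h^{(m)}(s)·(1 − exp(−h)) = (1 − s·(1 − exp(−(m+1)·h))) / (1 − s·(1 − exp(−m·h))). -/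
/-!
In the coordinate `s / (1 - s)`, the map `r t` is multiplication by `exp (-t)`. The maps therefore
compose by `r a ∘ r b = r (a + b)` away from their poles, and `(r h)^[m] = r (m * h)`. The claim is
thus about a single map `r b`: the denominator of `r a` at `r b s` is a quotient of the denominators
of `r (a + b)` and `r b` at `s`.
-/

theorem one_sub_r_mul_one_sub_exp (a : ℝ) {b s : ℝ} (hb : 1 - s * (1 - Real.exp (-b)) ≠ 0) :
    1 - r b s * (1 - Real.exp (-a)) =
      (1 - s * (1 - Real.exp (-(a + b)))) / (1 - s * (1 - Real.exp (-b))) := by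
  rw [r, eq_div_iff hb, sub_mul, mul_right_comm, div_mul_cancel₀ _ hb, neg_add, Real.exp_add]
  ring

theorem r_zero (s : ℝ) : r 0 s = s := by
  simp [r]

theorem r_add (a : ℝ) {b s : ℝ} (hb : 1 - s * (1 - Real.exp (-b)) ≠ 0) :
    r (a + b) s = r a (r b s) := by
  calc r (a + b) s
    _ = s * Real.exp (-b) * Real.exp (-a) / (1 - s * (1 - Real.exp (-(a + b)))) := by
      rw [r, neg_add_rev, Real.exp_add, mul_assoc]
    _ = r b s * Real.exp (-a) / (1 - r b s * (1 - Real.exp (-a))) := by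
      rw [one_sub_r_mul_one_sub_exp a hb, r, div_mul_eq_mul_div, div_div_div_cancel_right₀ hb]
    _ = r a (r b s) := rfl

theorem iterate_r_eq_r_nat_mul {h s : ℝ} {m : ℕ}
    (hne : ∀ k < m, 1 - s * (1 - Real.exp (-(k * h))) ≠ 0) :
    (r h)^[m] s = r (m * h) s := by
  induction m with
  | zero => simp [r_zero]
  | succ m ih =>
    calc (r h)^[m + 1] s
      _ = r h (r (m * h) s) := by
        rw [Function.iterate_succ_apply', ih fun k hk => hne k (hk.trans m.lt_succ_self)]
      _ = r (h + m * h) s := (r_add h (hne m m.lt_succ_self)).symm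
      _ = r ((m + 1 : ℕ) * h) s := by rw [Nat.cast_succ, add_one_mul, add_comm]

theorem one_sub_mul_one_sub_exp_neg_pos {s t : ℝ} (hs : s ≤ 1) (ht : 0 ≤ t) :
    0 < 1 - s * (1 - Real.exp (-t)) := by
  have hexp : 0 ≤ 1 - Real.exp (-t) := by simpa using ht
  calc 0 < (1 - s) * (1 - Real.exp (-t)) + Real.exp (-t) :=
        add_pos_of_nonneg_of_pos (mul_nonneg (sub_nonneg.2 hs) hexp) (Real.exp_pos _)
    _ = 1 - s * (1 - Real.exp (-t)) := by ring

theorem one_sub_iterate_r_eq_div_general (h s : ℝ) (m : ℕ)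
    (hne : ∀ k ≤ m, 1 - s * (1 - Real.exp (-(k : ℝ) * h)) ≠ 0) :
    1 - (r h)^[m] s * (1 - Real.exp (-h)) =
      (1 - s * (1 - Real.exp (-((m : ℝ) + 1) * h))) /
        (1 - s * (1 - Real.exp (-(m : ℝ) * h))) := by
  simp only [neg_mul] at hne ⊢
  rw [iterate_r_eq_r_nat_mul fun k hk => hne k hk.le,
    one_sub_r_mul_one_sub_exp h (hne m le_rfl), add_one_mul, add_comm h]

/-- `1 − r_h^{(m)}(s)·(1 − exp(−h))
      = (1 − s·(1 − exp(−(m+1)·h))) / (1 − s·(1 − exp(−m·h)))`. -/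
theorem one_sub_iterate_r_eq_div (h : ℝ) (hh : 0 < h) (s : ℝ) (hs : s < 1) (m : ℕ) :
    1 - (r h)^[m] s * (1 - Real.exp (-h)) =
      (1 - s * (1 - Real.exp (-((m : ℝ) + 1) * h))) /
        (1 - s * (1 - Real.exp (-(m : ℝ) * h))) := by
  refine one_sub_iterate_r_eq_div_general h s m fun k _ => ?_
  simpa only [neg_mul] using (one_sub_mul_one_sub_exp_neg_pos hs.le (by positivity)).ne'
end

section
/- Let h > 0, a ∈ ℝ, θ₀ ∈ ℝ, and M ≥ 1 a natural number. Then for every real s < 1, [∏_{m=1}^{M} (1 − r_h^{(m−1)}(s)·(1 − exp(−h)))^{−a}] · exp(θ₀·r_h^{(M)}(s)) = (1 − s·(1 − exp(−M·h)))^{−a} · exp(θ₀·s·exp(−M·h) / (1 − s·(1 − exp(−M·h)))). (This is the closed form of the moment generating function of the exact CIR process with stationary distribution Gamma(a,1), started at θ₀ and run for time M·h.) -/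
/-! The map `r h` is the time-`h` map of the flow of the logistic equation `s' = -s * (1 - s)`, and
its denominator `D t s = 1 - s * (1 - exp (-t))` is a multiplicative cocycle over this flow:
`D (t + u) s = D t s * D u (r t s)`. Hence the `M`-fold iterate of `r h` is `r (M * h)`, and the
product of the factors `D h (r (k * h) s)` over `k < M` telescopes to `D (M * h) s`. Since `D t s`
is monotone or antitone in `t` and `D 0 s = 1`, positivity at time `M * h` gives positivity at all
earlier times, so the real powers of the factors may be multiplied. -/

/-- The denominator `1 - s * (1 - exp (-t))` of `r t s`, whose power `-a` is the factor
independent of `θ₀` in the moment generating function of the CIR process at time `t`. -/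
noncomputable def cirDenom (t s : ℝ) : ℝ :=
  1 - s * (1 - Real.exp (-t))

theorem cirDenom_zero (s : ℝ) : cirDenom 0 s = 1 := by
  simp [cirDenom]

section Flow

variable {t s : ℝ}

theorem cirDenom_add (ht : cirDenom t s ≠ 0) (u : ℝ) :
    cirDenom (t + u) s = cirDenom t s * cirDenom u (r t s) := by
  have hr : cirDenom t s * r t s = s * Real.exp (-t) := mul_div_cancel₀ _ ht
  calc cirDenom (t + u) s
      = cirDenom t s - s * Real.exp (-t) * (1 - Real.exp (-u)) := by
        simp only [cirDenom, neg_add, Real.exp_add]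
        ring
    _ = cirDenom t s * (1 - r t s * (1 - Real.exp (-u))) := by
        rw [← hr]
        ring

theorem r_add_s5 (ht : cirDenom t s ≠ 0) (u : ℝ) : r (t + u) s = r u (r t s) :=
  calc r (t + u) s
      = s * Real.exp (-t) * Real.exp (-u) / cirDenom (t + u) s := by
        rw [mul_assoc, ← Real.exp_add, ← neg_add]
        rfl
    _ = s * Real.exp (-t) / cirDenom t s * Real.exp (-u) / cirDenom u (r t s) := by
        rw [cirDenom_add ht, ← div_div, div_mul_eq_mul_div]

end Flow

section Iterate

variable {h s : ℝ} {n : ℕ}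

theorem iterate_r (hD : ∀ k < n, cirDenom (k * h) s ≠ 0) : (r h)^[n] s = r (n * h) s := by
  induction n with
  | zero => simp [r_zero]
  | succ n ih =>
    rw [Function.iterate_succ_apply', ih fun k hk ↦ hD k (hk.trans n.lt_succ_self),
      ← r_add_s5 (hD n n.lt_succ_self), Nat.cast_succ, add_one_mul]

theorem prod_cirDenom_r (hD : ∀ k < n, cirDenom (k * h) s ≠ 0) :
    ∏ k ∈ Finset.range n, cirDenom h (r (k * h) s) = cirDenom (n * h) s := by
  refine Finset.prod_range_induction _ (fun k : ℕ ↦ cirDenom (k * h) s) ?_ n fun k hk ↦ ?_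
  · simp [cirDenom_zero]
  · rw [Nat.cast_succ, add_one_mul, cirDenom_add (hD k hk)]

end Iterate

section Positivity

variable {t u s : ℝ}

theorem cirDenom_pos_of_mem_uIcc (ht : 0 < cirDenom t s) (hu : u ∈ Set.uIcc 0 t) :
    0 < cirDenom u s := by
  have hmem : cirDenom u s ∈ Set.uIcc (cirDenom 0 s) (cirDenom t s) := by
    rcases le_total 0 s with hs | hs
    · have hanti : Antitone (cirDenom · s) := fun x y hxy ↦ by
        simp only [cirDenom]
        gcongr
      exact hanti.mapsTo_uIcc hu
    · have hmono : Monotone (cirDenom · s) := fun x y hxy ↦ by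
        refine sub_le_sub_left (mul_le_mul_of_nonpos_left ?_ hs) 1
        gcongr
      exact hmono.mapsTo_uIcc hu
  rw [cirDenom_zero] at hmem
  exact (lt_min one_pos ht).trans_le hmem.1

theorem cirDenom_pos_of_lt_one (ht : 0 ≤ t) (hs : s < 1) : 0 < cirDenom t s := by
  have hexp : Real.exp (-t) ≤ 1 := Real.exp_le_one_iff.2 (neg_nonpos.2 ht)
  calc 0 < Real.exp (-t) := Real.exp_pos _
    _ = 1 - 1 * (1 - Real.exp (-t)) := by ring
    _ ≤ cirDenom t s :=
        sub_le_sub_left (mul_le_mul_of_nonneg_right hs.le (sub_nonneg.2 hexp)) 1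

theorem cirDenom_r_pos (ht : 0 < cirDenom t s) (htu : 0 < cirDenom (t + u) s) :
    0 < cirDenom u (r t s) := by
  rw [cirDenom_add ht.ne'] at htu
  exact pos_of_mul_pos_right htu ht.le

theorem cirDenom_natCast_mul_pos {h : ℝ} {k n : ℕ} (hn : 0 < cirDenom (n * h) s) (hkn : k ≤ n) :
    0 < cirDenom (k * h) s := by
  refine cirDenom_pos_of_mem_uIcc hn ?_
  have hkn' : (k : ℝ) ≤ n := Nat.cast_le.2 hkn
  rcases le_total 0 h with hh | hh
  · exact Set.mem_uIcc.2 (.inl ⟨by positivity, by gcongr⟩)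
  · exact Set.mem_uIcc.2 (.inr ⟨mul_le_mul_of_nonpos_right hkn' hh,
      mul_nonpos_of_nonneg_of_nonpos k.cast_nonneg hh⟩)

end Positivity

theorem prod_cirDenom_iterate_r_rpow {h s : ℝ} {n : ℕ} (hn : 0 < cirDenom (n * h) s) (b : ℝ) :
    ∏ k ∈ Finset.range n, cirDenom h ((r h)^[k] s) ^ b = cirDenom (n * h) s ^ b := by
  have hpos : ∀ k ≤ n, 0 < cirDenom (k * h) s := fun k ↦ cirDenom_natCast_mul_pos hn
  have hfactor : ∀ k < n, 0 < cirDenom h (r (k * h) s) := fun k hk ↦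
    cirDenom_r_pos (hpos k hk.le) <| by simpa [add_one_mul] using hpos (k + 1) hk
  calc ∏ k ∈ Finset.range n, cirDenom h ((r h)^[k] s) ^ b
      = ∏ k ∈ Finset.range n, cirDenom h (r (k * h) s) ^ b :=
        Finset.prod_congr rfl fun k hk ↦ by
          rw [iterate_r fun j hj ↦ (hpos j (hj.trans (Finset.mem_range.1 hk)).le).ne']
    _ = (∏ k ∈ Finset.range n, cirDenom h (r (k * h) s)) ^ b :=
        Real.finsetProd_rpow _ _ (fun k hk ↦ (hfactor k (Finset.mem_range.1 hk)).le) b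
    _ = cirDenom (n * h) s ^ b := by
        rw [prod_cirDenom_r fun k hk ↦ (hpos k hk.le).ne']

/-- For `0 < h`, `0 < a`, `0 ≤ θ₀` and `1 ≤ M`, `hs` describes the half-line
`s < 1 / (1 - exp (-M * h))` on which the moment generating function is finite. -/
theorem cir_mgf_closed_form_general (h a θ₀ : ℝ) (M : ℕ) (s : ℝ)
    (hs : s * (1 - Real.exp (-(M : ℝ) * h)) < 1) :
    (∏ m ∈ Finset.Icc 1 M,
        (1 - (r h)^[m - 1] s * (1 - Real.exp (-h))) ^ (-a)) *
      Real.exp (θ₀ * (r h)^[M] s) =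
    (1 - s * (1 - Real.exp (-(M : ℝ) * h))) ^ (-a) *
      Real.exp (θ₀ * s * Real.exp (-(M : ℝ) * h) /
        (1 - s * (1 - Real.exp (-(M : ℝ) * h)))) := by
  rw [neg_mul] at hs ⊢
  have hM : 0 < cirDenom (M * h) s := sub_pos.2 hs
  have hprod : ∏ m ∈ Finset.Icc 1 M, (1 - (r h)^[m - 1] s * (1 - Real.exp (-h))) ^ (-a) =
      cirDenom (M * h) s ^ (-a) := by
    rw [← prod_cirDenom_iterate_r_rpow hM, Finset.range_eq_Ico,
      ← Finset.Ico_add_one_right_eq_Icc, Finset.prod_Ico_eq_prod_range]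
    simp [cirDenom]
  have hiter : (r h)^[M] s = r (M * h) s :=
    iterate_r fun k hk ↦ (cirDenom_natCast_mul_pos hM hk.le).ne'
  rw [hprod, hiter, mul_assoc θ₀, mul_div_assoc θ₀]
  rfl

/-- Closed form of the MGF of the exact CIR process with stationary
distribution `Gamma(a,1)`, started at `θ₀` and run for time `M·h`. -/
theorem cir_mgf_closed_form (h : ℝ) (hh : 0 < h) (a θ₀ : ℝ)
    (M : ℕ) (hM : 1 ≤ M) (s : ℝ) (hs : s < 1) :
    (∏ m ∈ Finset.Icc 1 M,
        (1 - (r h)^[m - 1] s * (1 - Real.exp (-h))) ^ (-a)) *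
      Real.exp (θ₀ * (r h)^[M] s) =
    (1 - s * (1 - Real.exp (-(M : ℝ) * h))) ^ (-a) *
      Real.exp (θ₀ * s * Real.exp (-(M : ℝ) * h) /
        (1 - s * (1 - Real.exp (-(M : ℝ) * h)))) :=
  cir_mgf_closed_form_general h a θ₀ M s <| by
    simpa [cirDenom] using cirDenom_pos_of_lt_one (mul_nonneg M.cast_nonneg hh.le) hs
end

section
/- Let h > 0, a ∈ ℝ, θ₀ ∈ ℝ. Define μ_m = θ₀·exp(−m·h) + a·(1 − exp(−m·h)), and define the sequence (v_m) by v₀ = 0 and v_{m+1} = exp(−2h)·v_m + a·(1 − exp(−h))² + 2·μ_m·exp(−h)·(1 − exp(−h)). Then for every natural number M, v_M = 2·θ₀·(exp(−M·h) − exp(−2M·h)) + a·(1 − exp(−M·h))². (This is the variance Var[θ_M] of the CIR process started at θ₀ with stationary distribution Gamma(a,1), run for time M·h, as stated in Corollary 1 of the paper; the recursion is the law-of-total-variance recursion implied by the conditional mean and variance of the CIR transition.) -/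
/-!
The claimed variance at time `M * h` is the conditional variance of a single CIR transition whose
discount factor is `exp (-h) ^ M`. The conditional moments of the transitions satisfy the law of
total variance `Var_{p q}(θ) = q² Var_p(θ) + Var_q(E_p(θ))`, which is a polynomial identity in the
discount factors `p` and `q`; taking `p = exp (-h) ^ m` and `q = exp (-h)` turns it into the
recursion for `v`.
-/

section Transition

variable {R : Type*} [CommRing R]

/-- The conditional mean of the CIR transition from the state `θ`. The step size `h` enters only
through the discount factor `q = exp (-h)`, so that composing transitions multiplies the factors. -/
def cirMean (a q θ : R) : R :=
  θ * q + a * (1 - q)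

/-- The conditional variance of the CIR transition from the state `θ`, in terms of the discount
factor `q = exp (-h)` as in `cirMean`. -/
def cirVariance (a q θ : R) : R :=
  a * (1 - q) ^ 2 + 2 * θ * q * (1 - q)

@[simp]
lemma cirVariance_one (a θ : R) : cirVariance a 1 θ = 0 := by
  simp [cirVariance]

lemma cirVariance_mul (a p q θ : R) :
    cirVariance a (p * q) θ = q ^ 2 * cirVariance a p θ + cirVariance a q (cirMean a p θ) := by
  simp only [cirVariance, cirMean]
  ring

theorem cir_variance_general (q a θ₀ : R) (μ v : ℕ → R)
    (hμ : ∀ m, μ m = cirMean a (q ^ m) θ₀) (hv0 : v 0 = 0)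
    (hvrec : ∀ m, v (m + 1) = q ^ 2 * v m + cirVariance a q (μ m)) (M : ℕ) :
    v M = cirVariance a (q ^ M) θ₀ := by
  induction M with
  | zero => rw [hv0, pow_zero, cirVariance_one]
  | succ m ih => rw [hvrec, ih, hμ, ← cirVariance_mul, ← pow_succ]

end Transition

lemma exp_neg_natCast_mul (n : ℕ) (x : ℝ) : Real.exp (-(n : ℝ) * x) = Real.exp (-x) ^ n := by
  rw [neg_mul_comm, Real.exp_nat_mul]

lemma cirVariance_exp_neg_pow (a h θ : ℝ) (n : ℕ) :
    cirVariance a (Real.exp (-h) ^ n) θ =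
      2 * θ * (Real.exp (-(n : ℝ) * h) - Real.exp (-(2 * (n : ℝ)) * h)) +
        a * (1 - Real.exp (-(n : ℝ) * h)) ^ 2 := by
  have exp_two_mul : Real.exp (-(2 * (n : ℝ)) * h) = Real.exp (-h) ^ (2 * n) := by
    exact_mod_cast exp_neg_natCast_mul (2 * n) h
  rw [exp_two_mul, exp_neg_natCast_mul, cirVariance]
  ring

/-- The variance `Var[θ_M]` of the CIR process started at `θ₀` with stationary
distribution `Gamma(a,1)`, run for time `M·h` (Corollary 1 of the paper): with
`μ_m = θ₀·exp(−m·h) + a·(1 − exp(−m·h))`, `v₀ = 0` and the law-of-total-variance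
recursion `v_{m+1} = exp(−2h)·v_m + a·(1 − exp(−h))² + 2·μ_m·exp(−h)·(1 − exp(−h))`,
one has `v_M = 2·θ₀·(exp(−M·h) − exp(−2M·h)) + a·(1 − exp(−M·h))²`. -/
theorem cir_variance (h : ℝ) (hh : 0 < h) (a θ₀ : ℝ) (μ v : ℕ → ℝ)
    (hμ : ∀ m : ℕ, μ m = θ₀ * Real.exp (-(m : ℝ) * h) + a * (1 - Real.exp (-(m : ℝ) * h)))
    (hv0 : v 0 = 0)
    (hvrec : ∀ m : ℕ, v (m + 1) = Real.exp (-(2 * h)) * v m +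
      a * (1 - Real.exp (-h)) ^ 2 + 2 * μ m * Real.exp (-h) * (1 - Real.exp (-h))) :
    ∀ M : ℕ, v M = 2 * θ₀ * (Real.exp (-(M : ℝ) * h) - Real.exp (-(2 * (M : ℝ)) * h)) +
      a * (1 - Real.exp (-(M : ℝ) * h)) ^ 2 := by
  have discount_sq : Real.exp (-(2 * h)) = Real.exp (-h) ^ 2 := by
    simpa using exp_neg_natCast_mul 2 h
  intro M
  rw [← cirVariance_exp_neg_pow]
  exact cir_variance_general (Real.exp (-h)) a θ₀ μ v
    (fun m => by rw [hμ, exp_neg_natCast_mul, cirMean]) hv0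
    (fun m => by rw [hvrec, discount_sq, cirVariance, add_assoc]) M
end
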